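/- arXiv:1011.3561 — 2 statements merged into one kernel-verified Lean document; each statement's English description precedes it below -/
import Mathlib

section
/- An algebraic Kähler curvature tensor R on ℂ² has nonnegative orthogonal bisectional curvature if and only if it has nonnegative isotropic curvature; that is, K(v,w) + K(v,Jw) ≥ 0 for all v,w ∈ ℂ² with ℂ·v ⊥ ℂ·w holds if and only if for every orthonormal 4-frame (e₁,e₂,e₃,e₄) of ℝ⁴ one has R(e₁,e₃,e₃,e₁) + R(e₁,e₄,e₄,e₁) + R(e₂,e₃,e₃,e₂) + R(e₂,e₄,e₄,e₂) - 2·R(e₁,e₂,e₃,e₄) ≥ 0. -/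
/-!
A Kähler curvature tensor on `ℂ²` is a symmetric bilinear form on bivectors that only sees the
`J`-invariant part of a bivector, and this part is `ℝω ⊕ Λ⁻`, where `ω` is the Kähler form and `Λ⁻`
the three-dimensional space of anti-self-dual bivectors. Up to sign, `R` is therefore a
quadratic form on `ℝω ⊕ Λ⁻`; write `G` for its restriction to `Λ⁻`. The Bianchi identity says
exactly that the coefficient of `ω` is `T = tr G` (`exists_kahler_normal_form`).

* For orthogonal complex lines `ℂ·v`, `ℂ·w` with `|v| = |w|`, the bivectors `v ∧ Jv` and `w ∧ Jw`
  have the same `ω`-part `s = |v|²` and opposite anti-self-dual parts `±ξ`, with `|ξ| = s`, so the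
  orthogonal bisectional curvature is `s² T - G(ξ, ξ)` (`nob_cone`). By surjectivity of the Hopf map,
  its nonnegativity means `G(γ, γ) ≤ c² T` for every `γ ∈ Λ⁻` with `|γ| = c` (`nob_sphere`).
* By the Bianchi identity the isotropic curvature of an orthonormal frame is the value of the form at
  `α = e₁∧e₃ + e₂∧e₄` plus its value at `β = e₁∧e₄ - e₂∧e₃` (`frame_sum_nonneg`). If the frame is
  positively oriented, then `α`, `β` and `γ = e₁∧e₂ - e₃∧e₄` form an orthogonal basis of `Λ⁻`, and
  the sum is `4T - G(γ, γ)`, where `|γ| = 2`. If it is negatively oriented, `α` and `β` are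
  self-dual, and the sum is a nonnegative multiple of `T`;
  averaging over an orthonormal basis of `Λ⁻` shows `2T ≥ 0`.

For the converse, the frame `(v, Jv, w, Jw)` built from unit vectors has isotropic curvature equal to
four times the orthogonal bisectional curvature (`isotropic_complex_frame`).
-/

noncomputable section

/-- `ℂⁿ`, identified with `ℝ^{2n}` as a real vector space. -/
abbrev KV (n : ℕ) := Fin n → ℂ

variable {n : ℕ}

/-- The standard real inner product of `ℝ^{2n}` under the identification with `ℂⁿ`:
the real part of the hermitian inner product. -/
def rIn (x y : KV n) : ℝ := ∑ j, (x j * star (y j)).re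

/-- Multiplication by `i`, the standard complex structure `J`. -/
def Jm (x : KV n) : KV n := fun j => Complex.I * x j

/-- The complex lines `ℂ·v` and `ℂ·w` are orthogonal with respect to the real
inner product. -/
def linesOrth (v w : KV n) : Prop := ∀ a b : ℂ, rIn (a • v) (b • w) = 0

/-- An algebraic Kähler curvature tensor on `ℂⁿ`: an `ℝ`-multilinear map
`R : (ℝ^{2n})⁴ → ℝ` that is antisymmetric in the first two slots, symmetric in pairs,
satisfies the first Bianchi identity and the Kähler symmetry `R(Jx,Jy,z,w) = R(x,y,z,w)`. -/
def IsKahlerCurvature (R : KV n →ₗ[ℝ] KV n →ₗ[ℝ] KV n →ₗ[ℝ] KV n →ₗ[ℝ] ℝ) : Prop :=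
  (∀ x y z w, R x y z w = -R y x z w) ∧
  (∀ x y z w, R x y z w = R z w x y) ∧
  (∀ x y z w, R x y z w + R y z x w + R z x y w = 0) ∧
  (∀ x y z w, R (Jm x) (Jm y) z w = R x y z w)

/-- The (unnormalized) sectional curvature `K(v,w) := R(v,w,w,v)`. -/
def Ksec (R : KV n →ₗ[ℝ] KV n →ₗ[ℝ] KV n →ₗ[ℝ] KV n →ₗ[ℝ] ℝ) (v w : KV n) : ℝ :=
  R v w w v

/-- Nonnegative orthogonal bisectional curvature:
`K(v,w) + K(v,Jw) ≥ 0` whenever `ℂ·v ⊥ ℂ·w`. -/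
def NonnegOrthBisectional (R : KV n →ₗ[ℝ] KV n →ₗ[ℝ] KV n →ₗ[ℝ] KV n →ₗ[ℝ] ℝ) : Prop :=
  ∀ v w : KV n, linesOrth v w → 0 ≤ Ksec R v w + Ksec R v (Jm w)

/-- The `j`-th standard basis vector of `ℂⁿ`. -/
def eV (j : Fin n) : KV n := Pi.single j 1

/-- The Ricci form `Ric(v,w) = Σᵢ R(v,fᵢ,fᵢ,w)`, computed in the orthonormal real basis
`(e_j, J e_j)` of `ℝ^{2n}`. -/
def RicK (R : KV n →ₗ[ℝ] KV n →ₗ[ℝ] KV n →ₗ[ℝ] KV n →ₗ[ℝ] ℝ) (v w : KV n) : ℝ :=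
  ∑ j, (R v (eV j) (eV j) w + R v (Jm (eV j)) (Jm (eV j)) w)

namespace KahlerSurface

/-! ### Bivectors of `ℂ²` -/

/-- The four real coordinates of a vector of `ℂ²`, in the basis `e₀, Je₀, e₁, Je₁`. -/
def co (x : KV 2) : Fin 4 → ℝ := ![(x 0).re, (x 0).im, (x 1).re, (x 1).im]

/-- The vector of `ℂ²` with given real coordinates in the basis `e₀, Je₀, e₁, Je₁`. -/
def vec (a b c d : ℝ) : KV 2 := ![⟨a, b⟩, ⟨c, d⟩]

@[simp] lemma co_vec (a b c d : ℝ) : co (vec a b c d) = ![a, b, c, d] := by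
  simp [co, vec]

lemma Jm_vec (a b c d : ℝ) : Jm (vec a b c d) = vec (-b) a (-d) c := by
  funext j
  fin_cases j <;> apply Complex.ext <;> simp [Jm, vec]

lemma vec_neg_one : vec (-1) 0 0 0 = -vec 1 0 0 0 := by
  funext j
  fin_cases j <;> apply Complex.ext <;> simp [vec]

lemma vec_eq (x : KV 2) : x = co x 0 • vec 1 0 0 0 + co x 1 • vec 0 1 0 0
    + co x 2 • vec 0 0 1 0 + co x 3 • vec 0 0 0 1 := by
  funext j
  fin_cases j <;> apply Complex.ext <;> simp [co, vec]

/-- The pairing of the bivector `x ∧ y` with the Kähler form `ω`. -/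
def hp (x y : Fin 4 → ℝ) : ℝ := (x 0 * y 1 - x 1 * y 0) + (x 2 * y 3 - x 3 * y 2)

/-- The first anti-self-dual component of the bivector `x ∧ y`. -/
def hd (x y : Fin 4 → ℝ) : ℝ := (x 0 * y 1 - x 1 * y 0) - (x 2 * y 3 - x 3 * y 2)

/-- The second anti-self-dual component of the bivector `x ∧ y`. -/
def ha (x y : Fin 4 → ℝ) : ℝ := (x 0 * y 2 - x 2 * y 0) + (x 1 * y 3 - x 3 * y 1)

/-- The third anti-self-dual component of the bivector `x ∧ y`. -/
def hb (x y : Fin 4 → ℝ) : ℝ := (x 0 * y 3 - x 3 * y 0) - (x 1 * y 2 - x 2 * y 1)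

/-- The second self-dual component of `x ∧ y`, the first being `hp x y`. -/
def ka (x y : Fin 4 → ℝ) : ℝ := (x 0 * y 2 - x 2 * y 0) - (x 1 * y 3 - x 3 * y 1)

/-- The third self-dual component of `x ∧ y`. -/
def kb (x y : Fin 4 → ℝ) : ℝ := (x 0 * y 3 - x 3 * y 0) + (x 1 * y 2 - x 2 * y 1)

/-- The Euclidean inner product of `ℝ⁴`. -/
def dot (x y : Fin 4 → ℝ) : ℝ := x 0 * y 0 + x 1 * y 1 + x 2 * y 2 + x 3 * y 3

/-- The determinant of four vectors of `ℝ⁴`. -/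
def vol (x y z w : Fin 4 → ℝ) : ℝ := Matrix.det (Matrix.of ![x, y, z, w])

lemma vol_expand (x y z w : Fin 4 → ℝ) : vol x y z w =
    (x 0 * y 1 - x 1 * y 0) * (z 2 * w 3 - z 3 * w 2)
    - (x 0 * y 2 - x 2 * y 0) * (z 1 * w 3 - z 3 * w 1)
    + (x 0 * y 3 - x 3 * y 0) * (z 1 * w 2 - z 2 * w 1)
    + (x 1 * y 2 - x 2 * y 1) * (z 0 * w 3 - z 3 * w 0)
    - (x 1 * y 3 - x 3 * y 1) * (z 0 * w 2 - z 2 * w 0)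
    + (x 2 * y 3 - x 3 * y 2) * (z 0 * w 1 - z 1 * w 0) := by
  simp [vol, Matrix.det_succ_row_zero, Fin.sum_univ_succ, Fin.succAbove]
  ring

/-- The inner product of the anti-self-dual parts of two bivectors is, up to normalization, their inner
product minus their wedge pairing. -/
lemma asd_inner (x y z w : Fin 4 → ℝ) :
    hd x y * hd z w + ha x y * ha z w + hb x y * hb z w
      = dot x z * dot y w - dot x w * dot y z - vol x y z w := by
  rw [vol_expand]; simp only [hd, ha, hb, dot]; ring

/-- The inner product of the self-dual parts of two bivectors is, up to normalization, their inner
product plus their wedge pairing. -/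
lemma sd_inner (x y z w : Fin 4 → ℝ) :
    hp x y * hp z w + ka x y * ka z w + kb x y * kb z w
      = dot x z * dot y w - dot x w * dot y z + vol x y z w := by
  rw [vol_expand]; simp only [hp, ka, kb, dot]; ring

lemma rIn_eq_dot (x y : KV 2) : rIn x y = dot (co x) (co y) := by
  simp [rIn, dot, co, Fin.sum_univ_two]; ring

/-! ### Normal form of a Kähler curvature tensor -/

/-- A `J`-invariant alternating form on `ℂ²` only sees the components `hp, hd, ha, hb` of a
bivector. -/
lemma form_expand (B : KV 2 →ₗ[ℝ] KV 2 →ₗ[ℝ] ℝ) (hB : ∀ x y, B x y = -B y x)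
    (hJ : ∀ x y, B (Jm x) (Jm y) = B x y) (x y : KV 2) :
    B x y = (hp (co x) (co y) + hd (co x) (co y)) / 2 * B (vec 1 0 0 0) (vec 0 1 0 0)
      + (hp (co x) (co y) - hd (co x) (co y)) / 2 * B (vec 0 0 1 0) (vec 0 0 0 1)
      + ha (co x) (co y) * B (vec 1 0 0 0) (vec 0 0 1 0)
      + hb (co x) (co y) * B (vec 1 0 0 0) (vec 0 0 0 1) := by
  have h0 := hB (vec 1 0 0 0) (vec 1 0 0 0)
  have h1 := hB (vec 0 1 0 0) (vec 0 1 0 0)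
  have h2 := hB (vec 0 0 1 0) (vec 0 0 1 0)
  have h3 := hB (vec 0 0 0 1) (vec 0 0 0 1)
  have h10 := hB (vec 0 1 0 0) (vec 1 0 0 0)
  have h20 := hB (vec 0 0 1 0) (vec 1 0 0 0)
  have h30 := hB (vec 0 0 0 1) (vec 1 0 0 0)
  have h21 := hB (vec 0 0 1 0) (vec 0 1 0 0)
  have h31 := hB (vec 0 0 0 1) (vec 0 1 0 0)
  have h32 := hB (vec 0 0 0 1) (vec 0 0 1 0)
  have j13 := hJ (vec 1 0 0 0) (vec 0 0 1 0)
  have j12 := hJ (vec 0 1 0 0) (vec 0 0 1 0)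
  simp only [Jm_vec, neg_zero, vec_neg_one, map_neg, LinearMap.neg_apply] at j13 j12
  have e0 : B (vec 1 0 0 0) (vec 1 0 0 0) = 0 := by linarith
  have e1 : B (vec 0 1 0 0) (vec 0 1 0 0) = 0 := by linarith
  have e2 : B (vec 0 0 1 0) (vec 0 0 1 0) = 0 := by linarith
  have e3 : B (vec 0 0 0 1) (vec 0 0 0 1) = 0 := by linarith
  conv_lhs => rw [vec_eq x, vec_eq y]
  simp only [map_add, map_smul, LinearMap.add_apply, LinearMap.smul_apply, smul_eq_mul]
  rw [h31, h21, h10, h20, h30, h32, e0, e1, e2, e3, ← j12, j13]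
  simp only [hp, hd, ha, hb]
  ring

/-- Polarized quadratic form on `ℝω ⊕ Λ⁻` whose `ω`-coefficient is the trace of its restriction
`G` to `Λ⁻`. The coefficients `b` are the mixed ones, and `g` those of `G`. -/
def kform (b₁ b₂ b₃ g₁₁ g₁₂ g₁₃ g₂₂ g₂₃ g₃₃ p d a b p' d' a' b' : ℝ) : ℝ :=
  (g₁₁ + g₂₂ + g₃₃) * (p * p') + b₁ * (p * d' + d * p') + b₂ * (p * a' + a * p')
    + b₃ * (p * b' + b * p') + g₁₁ * (d * d') + g₁₂ * (d * a' + a * d') + g₁₃ * (d * b' + b * d')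
    + g₂₂ * (a * a') + g₂₃ * (a * b' + b * a') + g₃₃ * (b * b')

lemma apply_neg_left (R : KV 2 →ₗ[ℝ] KV 2 →ₗ[ℝ] KV 2 →ₗ[ℝ] KV 2 →ₗ[ℝ] ℝ) (x y z w : KV 2) :
    R (-x) y z w = -R x y z w := by
  rw [← neg_one_smul ℝ x, map_smul]
  simp only [LinearMap.smul_apply, smul_eq_mul, neg_one_mul]

/-- Up to sign, a Kähler curvature tensor is the form `kform` on the `J`-invariant parts of bivectors;
that the `ω`-coefficient equals the trace of `G` is the Bianchi identity. -/
lemma exists_kahler_normal_form (R : KV 2 →ₗ[ℝ] KV 2 →ₗ[ℝ] KV 2 →ₗ[ℝ] KV 2 →ₗ[ℝ] ℝ)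
    (hR : IsKahlerCurvature R) :
    ∃ b₁ b₂ b₃ g₁₁ g₁₂ g₁₃ g₂₂ g₂₃ g₃₃ : ℝ, ∀ x y z w : KV 2, R x y z w =
      -kform b₁ b₂ b₃ g₁₁ g₁₂ g₁₃ g₂₂ g₂₃ g₃₃
        (hp (co x) (co y)) (hd (co x) (co y)) (ha (co x) (co y)) (hb (co x) (co y))
        (hp (co z) (co w)) (hd (co z) (co w)) (ha (co z) (co w)) (hb (co z) (co w)) := by
  obtain ⟨hanti, hpair, hbi, hJ⟩ := hR
  have key (x y z w : KV 2) := form_expand (R x y)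
    (fun z w => by rw [hpair x y z w, hanti z w x y, hpair w z x y])
    (fun z w => by rw [hpair x y, hJ, hpair z w]) z w
  set f0 := vec 1 0 0 0 with hf0
  set f1 := vec 0 1 0 0 with hf1
  set f2 := vec 0 0 1 0 with hf2
  set f3 := vec 0 0 0 1 with hf3
  -- The Bianchi identity on the basis, in terms of the four `J`-invariant components.
  have bianchi : R f0 f1 f2 f3 = R f0 f2 f0 f2 + R f0 f3 f0 f3 := by
    have h := hbi f0 f1 f2 f3
    have j1 := hJ f1 f2 f0 f3
    have j2 := hJ f0 f2 f0 f2
    have e1 := hanti f2 f0 f1 f3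
    have e2 := hpair f0 f2 f1 f3
    have j4 : Jm f1 = -f0 := by rw [hf1, Jm_vec, neg_zero, vec_neg_one]
    have j0 : Jm f0 = f1 := by rw [hf0, Jm_vec, neg_zero]
    have j3 : Jm f2 = f3 := by rw [hf2, Jm_vec, neg_zero]
    rw [j4, j3, apply_neg_left] at j1
    rw [j0, j3] at j2
    linarith
  refine ⟨-(R f0 f1 f0 f1 - R f2 f3 f2 f3) / 4,
    -(R f0 f1 f0 f2 + R f2 f3 f0 f2) / 2,
    -(R f0 f1 f0 f3 + R f2 f3 f0 f3) / 2,
    -(R f0 f1 f0 f1 - 2 * R f0 f1 f2 f3 + R f2 f3 f2 f3) / 4,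
    -(R f0 f1 f0 f2 - R f2 f3 f0 f2) / 2,
    -(R f0 f1 f0 f3 - R f2 f3 f0 f3) / 2,
    -R f0 f2 f0 f2, -R f0 f2 f0 f3, -R f0 f3 f0 f3, fun x y z w => ?_⟩
  rw [key x y z w, hpair x y f0 f1, hpair x y f2 f3, hpair x y f0 f2, hpair x y f0 f3,
    key f0 f1 x y, key f2 f3 x y, key f0 f2 x y, key f0 f3 x y,
    hpair f2 f3 f0 f1, hpair f0 f2 f0 f1, hpair f0 f3 f0 f1, hpair f0 f2 f2 f3,
    hpair f0 f3 f2 f3, hpair f0 f3 f0 f2, bianchi]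
  simp only [kform]
  ring

/-! ### From orthogonal bisectional to isotropic curvature -/

/-- For `v = (p + iq, r + it)`, the bivector `v ∧ Jv` has `ω`-part `s = |v|²` and an anti-self-dual part
`ξ` with `|ξ| = s`. The orthogonal bisectional curvature of `v` and `w = (-v̄₂, v̄₁)` is
`s² tr G - G(ξ, ξ)`. -/
lemma nob_cone {b₁ b₂ b₃ g₁₁ g₁₂ g₁₃ g₂₂ g₂₃ g₃₃ : ℝ}
    {R : KV 2 →ₗ[ℝ] KV 2 →ₗ[ℝ] KV 2 →ₗ[ℝ] KV 2 →ₗ[ℝ] ℝ}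
    (hQ : ∀ x y z w : KV 2, R x y z w =
      -kform b₁ b₂ b₃ g₁₁ g₁₂ g₁₃ g₂₂ g₂₃ g₃₃
        (hp (co x) (co y)) (hd (co x) (co y)) (ha (co x) (co y)) (hb (co x) (co y))
        (hp (co z) (co w)) (hd (co z) (co w)) (ha (co z) (co w)) (hb (co z) (co w)))
    (h : NonnegOrthBisectional R) (p q r t : ℝ) :
    kform 0 0 0 g₁₁ g₁₂ g₁₃ g₂₂ g₂₃ g₃₃
      0 (p ^ 2 + q ^ 2 - r ^ 2 - t ^ 2) (2 * (q * r - p * t)) (2 * (p * r + q * t))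
      0 (p ^ 2 + q ^ 2 - r ^ 2 - t ^ 2) (2 * (q * r - p * t)) (2 * (p * r + q * t))
      ≤ (p ^ 2 + q ^ 2 + r ^ 2 + t ^ 2) ^ 2 * (g₁₁ + g₂₂ + g₃₃) := by
  have horth : linesOrth (vec p q r t) (vec (-r) t p (-q)) := by
    intro a b
    simp [rIn, vec, Fin.sum_univ_two]
    ring
  have := h _ _ horth
  simp only [Ksec, Jm_vec, hQ, co_vec] at this
  simp only [kform, hp, hd, ha, hb, Matrix.cons_val] at this ⊢
  linarith

/-- Surjectivity of the Hopf map turns the estimate on the cone `|ξ| = s` into one on the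
sphere of radius `2` in `Λ⁻`. -/
lemma nob_sphere {g₁₁ g₁₂ g₁₃ g₂₂ g₂₃ g₃₃ : ℝ}
    (h : ∀ p q r t : ℝ, kform 0 0 0 g₁₁ g₁₂ g₁₃ g₂₂ g₂₃ g₃₃
      0 (p ^ 2 + q ^ 2 - r ^ 2 - t ^ 2) (2 * (q * r - p * t)) (2 * (p * r + q * t))
      0 (p ^ 2 + q ^ 2 - r ^ 2 - t ^ 2) (2 * (q * r - p * t)) (2 * (p * r + q * t))
      ≤ (p ^ 2 + q ^ 2 + r ^ 2 + t ^ 2) ^ 2 * (g₁₁ + g₂₂ + g₃₃))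
    (d a b : ℝ) (hs : d * d + a * a + b * b = 4) :
    kform 0 0 0 g₁₁ g₁₂ g₁₃ g₂₂ g₂₃ g₃₃ 0 d a b 0 d a b ≤ 4 * (g₁₁ + g₂₂ + g₃₃) := by
  by_cases hd : d = -2
  · subst hd
    have ha : a = 0 := by nlinarith [sq_nonneg a, sq_nonneg b]
    have hb : b = 0 := by nlinarith [sq_nonneg a, sq_nonneg b]
    have := h 0 0 1 0
    subst ha hb
    simp only [kform] at this ⊢
    linarith
  · -- Unnormalized stereographic preimage of `(d, a, b)`; it is sent to `2 * (2 + d)` times it.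
    have h1 := h (2 + d) 0 b (-a)
    have hpos : 0 < (2 * (2 + d)) ^ 2 := by
      have : 2 + d ≠ 0 := fun h => hd (by linarith)
      positivity
    have e1 : (2 + d) ^ 2 + 0 ^ 2 - b ^ 2 - (-a) ^ 2 = 2 * (2 + d) * d := by linarith
    have e2 : (2 + d) ^ 2 + 0 ^ 2 + b ^ 2 + (-a) ^ 2 = 2 * (2 + d) * 2 := by linarith
    rw [e1, e2] at h1
    refine le_of_mul_le_mul_left ?_ hpos
    simp only [kform] at h1 ⊢
    linarith

lemma trace_nonneg {g₁₁ g₁₂ g₁₃ g₂₂ g₂₃ g₃₃ : ℝ}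
    (h : ∀ d a b : ℝ, d * d + a * a + b * b = 4 →
      kform 0 0 0 g₁₁ g₁₂ g₁₃ g₂₂ g₂₃ g₃₃ 0 d a b 0 d a b ≤ 4 * (g₁₁ + g₂₂ + g₃₃)) :
    0 ≤ g₁₁ + g₂₂ + g₃₃ := by
  have h1 := h 2 0 0 (by norm_num)
  have h2 := h 0 2 0 (by norm_num)
  have h3 := h 0 0 2 (by norm_num)
  simp only [kform] at h1 h2 h3
  linarith

/-- If three vectors of `ℝ³` are orthogonal of length `2`, the values of a quadratic form on them
add up to four times its trace. -/
lemma sum_eq_trace {g₁₁ g₁₂ g₁₃ g₂₂ g₂₃ g₃₃ d a b d' a' b' d'' a'' b'' : ℝ}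
    (h1 : d * d + a * a + b * b = 4) (h2 : d' * d' + a' * a' + b' * b' = 4)
    (h3 : d'' * d'' + a'' * a'' + b'' * b'' = 4) (h12 : d * d' + a * a' + b * b' = 0)
    (h13 : d * d'' + a * a'' + b * b'' = 0) (h23 : d' * d'' + a' * a'' + b' * b'' = 0) :
    kform 0 0 0 g₁₁ g₁₂ g₁₃ g₂₂ g₂₃ g₃₃ 0 d a b 0 d a b
      + kform 0 0 0 g₁₁ g₁₂ g₁₃ g₂₂ g₂₃ g₃₃ 0 d' a' b' 0 d' a' b'
      + kform 0 0 0 g₁₁ g₁₂ g₁₃ g₂₂ g₂₃ g₃₃ 0 d'' a'' b'' 0 d'' a'' b''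
      = 4 * (g₁₁ + g₂₂ + g₃₃) := by
  let N : Matrix (Fin 3) (Fin 3) ℝ := !![d, a, b; d', a', b'; d'', a'', b'']
  have hN : N * ((1 / 4 : ℝ) • N.transpose) = 1 := by
    ext i j
    fin_cases i <;> fin_cases j <;>
      simp [N, Matrix.mul_apply, Fin.sum_univ_three] <;> linarith
  have hN' := mul_eq_one_comm.mp hN
  have key (i j : Fin 3) := congrFun (congrFun hN' i) j
  have k00 := key 0 0
  have k01 := key 0 1
  have k02 := key 0 2
  have k11 := key 1 1
  have k12 := key 1 2
  have k22 := key 2 2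
  simp [N, Matrix.mul_apply, Fin.sum_univ_three] at k00 k01 k02 k11 k12 k22
  simp only [kform]
  linear_combination 4 * g₁₁ * k00 + 8 * g₁₂ * k01 + 8 * g₁₃ * k02 + 4 * g₂₂ * k11
    + 8 * g₂₃ * k12 + 4 * g₃₃ * k22

/-- The values of the form at the bivectors `x ∧ z + y ∧ w` and `x ∧ w - y ∧ z` of an orthonormal
frame have nonnegative sum. -/
lemma frame_sum_nonneg {b₁ b₂ b₃ g₁₁ g₁₂ g₁₃ g₂₂ g₂₃ g₃₃ : ℝ}
    (hS : ∀ d a b : ℝ, d * d + a * a + b * b = 4 →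
      kform 0 0 0 g₁₁ g₁₂ g₁₃ g₂₂ g₂₃ g₃₃ 0 d a b 0 d a b ≤ 4 * (g₁₁ + g₂₂ + g₃₃))
    {x y z w : Fin 4 → ℝ}
    (xx : dot x x = 1) (yy : dot y y = 1) (zz : dot z z = 1) (ww : dot w w = 1)
    (xy : dot x y = 0) (xz : dot x z = 0) (xw : dot x w = 0) (yz : dot y z = 0)
    (yw : dot y w = 0) (zw : dot z w = 0) :
    0 ≤ kform b₁ b₂ b₃ g₁₁ g₁₂ g₁₃ g₂₂ g₂₃ g₃₃
        (hp x z + hp y w) (hd x z + hd y w) (ha x z + ha y w) (hb x z + hb y w)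
        (hp x z + hp y w) (hd x z + hd y w) (ha x z + ha y w) (hb x z + hb y w)
      + kform b₁ b₂ b₃ g₁₁ g₁₂ g₁₃ g₂₂ g₂₃ g₃₃
        (hp x w - hp y z) (hd x w - hd y z) (ha x w - ha y z) (hb x w - hb y z)
        (hp x w - hp y z) (hd x w - hd y z) (ha x w - ha y z) (hb x w - hb y z) := by
  have dc (u v : Fin 4 → ℝ) : dot u v = dot v u := by simp only [dot]; ring
  have hvol : vol x y z w * vol x y z w = 1 := by
    have hM : (Matrix.of ![x, y, z, w]) * (Matrix.of ![x, y, z, w]).transpose = 1 := by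
      have hMd (u v : Fin 4 → ℝ) : ∑ k, u k * v k = dot u v := by
        simp [dot, Fin.sum_univ_four]
      ext i j
      fin_cases i <;> fin_cases j <;>
        simp [Matrix.mul_apply, hMd, xx, yy, zz, ww, xy, xz, xw, yz, yw, zw, dc y x, dc z x,
          dc w x, dc z y, dc w y, dc w z]
    have := congrArg Matrix.det hM
    rwa [Matrix.det_mul, Matrix.det_transpose, Matrix.det_one] at this
  have volneg : vol x z y w = -vol x y z w := by simp only [vol_expand]; ring
  have volpos : vol x w y z = vol x y z w := by simp only [vol_expand]; ring
  have v0 (u v s : Fin 4 → ℝ) : vol u v u s = 0 ∧ vol u v s u = 0 ∧ vol u v v s = 0 ∧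
      vol u v s v = 0 := by
    refine ⟨?_, ?_, ?_, ?_⟩ <;> (simp only [vol_expand]; ring)
  -- The inner products between the anti-self-dual parts of the bivectors of the frame.
  have nα := asd_inner x z x z
  have nα' := asd_inner y w y w
  have nαc := asd_inner x z y w
  have nβ := asd_inner x w x w
  have nβ' := asd_inner y z y z
  have nβc := asd_inner x w y z
  have sα := sd_inner x z x z
  have sα' := sd_inner y w y w
  have sαc := sd_inner x z y w
  have sβ := sd_inner x w x w
  have sβ' := sd_inner y z y z
  have sβc := sd_inner x w y z
  have nγ := asd_inner x y x y
  have nγ' := asd_inner z w z w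
  have nγc := asd_inner x y z w
  have m1 := asd_inner x z x w
  have m2 := asd_inner x z y z
  have m3 := asd_inner y w x w
  have m4 := asd_inner y w y z
  have m5 := asd_inner x z x y
  have m6 := asd_inner x z z w
  have m7 := asd_inner y w x y
  have m8 := asd_inner y w z w
  have m9 := asd_inner x w x y
  have m10 := asd_inner x w z w
  have m11 := asd_inner y z x y
  have m12 := asd_inner y z z w
  simp only [v0, volneg, volpos, xx, yy, zz, ww, xy, xz, xw, yz, yw, zw, dc y x, dc z x,
    dc w x, dc z y, dc w y, dc w z] at nα nα' nαc nβ nβ' nβc sα sα' sαc sβ sβ' sβc nγ nγ' nγc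
  simp only [v0, xx, yy, zz, ww, xy, xz, xw, yz, yw, zw, dc y x, dc z x,
    dc w x, dc z y, dc w y, dc w z] at m1 m2 m3 m4 m5 m6 m7 m8 m9 m10 m11 m12
  have zero3 {a b c : ℝ} (h : a * a + b * b + c * c = 0) : a = 0 ∧ b = 0 ∧ c = 0 := by
    refine ⟨?_, ?_, ?_⟩ <;> nlinarith only [h, sq_nonneg a, sq_nonneg b, sq_nonneg c]
  rcases mul_self_eq_one_iff.mp hvol with hv | hv
  · -- Positively oriented frame: both bivectors are anti-self-dual.
    have pα : hp x z + hp y w = 0 := (zero3 (b := ka x z + ka y w) (c := kb x z + kb y w)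
      (by linear_combination sα + sα' + 2 * sαc - 2 * hv)).1
    have pβ : hp x w - hp y z = 0 := (zero3 (b := ka x w - ka y z) (c := kb x w - kb y z)
      (by linear_combination sβ + sβ' - 2 * sβc - 2 * hv)).1
    have nγ4 : (hd x y - hd z w) * (hd x y - hd z w) + (ha x y - ha z w) * (ha x y - ha z w)
        + (hb x y - hb z w) * (hb x y - hb z w) = 4 := by
      linear_combination nγ + nγ' - 2 * nγc + 2 * hv
    have hsum := sum_eq_trace (g₁₁ := g₁₁) (g₁₂ := g₁₂) (g₁₃ := g₁₃) (g₂₂ := g₂₂) (g₂₃ := g₂₃)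
      (g₃₃ := g₃₃)
      (d := hd x z + hd y w) (a := ha x z + ha y w) (b := hb x z + hb y w)
      (d' := hd x w - hd y z) (a' := ha x w - ha y z) (b' := hb x w - hb y z)
      (d'' := hd x y - hd z w) (a'' := ha x y - ha z w) (b'' := hb x y - hb z w)
      (by linear_combination nα + nα' + 2 * nαc + 2 * hv)
      (by linear_combination nβ + nβ' - 2 * nβc + 2 * hv) nγ4
      (by linear_combination m1 - m2 + m3 - m4) (by linear_combination m5 - m6 + m7 - m8)
      (by linear_combination m9 - m10 - m11 + m12)
    have hγ := hS _ _ _ nγ4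
    rw [pα, pβ]
    simp only [kform] at hsum hγ ⊢
    linarith only [hsum, hγ]
  · -- Negatively oriented frame: the anti-self-dual parts vanish.
    obtain ⟨hα1, hα2, hα3⟩ := zero3 (a := hd x z + hd y w) (b := ha x z + ha y w)
      (c := hb x z + hb y w) (by linear_combination nα + nα' + 2 * nαc + 2 * hv)
    obtain ⟨hβ1, hβ2, hβ3⟩ := zero3 (a := hd x w - hd y z) (b := ha x w - ha y z)
      (c := hb x w - hb y z) (by linear_combination nβ + nβ' - 2 * nβc + 2 * hv)
    rw [hα1, hα2, hα3, hβ1, hβ2, hβ3]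
    have t1 := mul_nonneg (trace_nonneg hS) (mul_self_nonneg (hp x z + hp y w))
    have t2 := mul_nonneg (trace_nonneg hS) (mul_self_nonneg (hp x w - hp y z))
    simp only [kform]
    linarith only [t1, t2]

lemma isotropic_of_nob (R : KV 2 →ₗ[ℝ] KV 2 →ₗ[ℝ] KV 2 →ₗ[ℝ] KV 2 →ₗ[ℝ] ℝ)
    (hR : IsKahlerCurvature R) (h : NonnegOrthBisectional R) (e : Fin 4 → KV 2)
    (he : ∀ i j, rIn (e i) (e j) = if i = j then 1 else 0) :
    0 ≤ R (e 0) (e 2) (e 2) (e 0) + R (e 0) (e 3) (e 3) (e 0)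
      + R (e 1) (e 2) (e 2) (e 1) + R (e 1) (e 3) (e 3) (e 1)
      - 2 * R (e 0) (e 1) (e 2) (e 3) := by
  obtain ⟨b₁, b₂, b₃, g₁₁, g₁₂, g₁₃, g₂₂, g₂₃, g₃₃, hQ⟩ := exists_kahler_normal_form R hR
  have hS := nob_sphere (nob_cone hQ h)
  have hB := hR.2.2.1 (e 0) (e 1) (e 2) (e 3)
  have hB' : R (e 0) (e 1) (e 2) (e 3) = -R (e 1) (e 2) (e 0) (e 3) - R (e 2) (e 0) (e 1) (e 3) := by
    linarith
  rw [hB']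
  simp only [hQ]
  have hdot (i j : Fin 4) : dot (co (e i)) (co (e j)) = if i = j then 1 else 0 := by
    rw [← rIn_eq_dot, he]
  generalize hx : co (e 0) = x at *
  generalize hy : co (e 1) = y at *
  generalize hz : co (e 2) = z at *
  generalize hw : co (e 3) = w at *
  have xx : dot x x = 1 := by simpa [hx] using hdot 0 0
  have yy : dot y y = 1 := by simpa [hy] using hdot 1 1
  have zz : dot z z = 1 := by simpa [hz] using hdot 2 2
  have ww : dot w w = 1 := by simpa [hw] using hdot 3 3
  have xy : dot x y = 0 := by simpa [hx, hy] using hdot 0 1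
  have xz : dot x z = 0 := by simpa [hx, hz] using hdot 0 2
  have xw : dot x w = 0 := by simpa [hx, hw] using hdot 0 3
  have yz : dot y z = 0 := by simpa [hy, hz] using hdot 1 2
  have yw : dot y w = 0 := by simpa [hy, hw] using hdot 1 3
  have zw : dot z w = 0 := by simpa [hz, hw] using hdot 2 3
  have anti_p (u v : Fin 4 → ℝ) : hp u v = -hp v u := by simp only [hp]; ring
  have anti_d (u v : Fin 4 → ℝ) : hd u v = -hd v u := by simp only [hd]; ring
  have anti_a (u v : Fin 4 → ℝ) : ha u v = -ha v u := by simp only [ha]; ring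
  have anti_b (u v : Fin 4 → ℝ) : hb u v = -hb v u := by simp only [hb]; ring
  rw [anti_p z x, anti_d z x, anti_a z x, anti_b z x, anti_p w x, anti_d w x, anti_a w x,
    anti_b w x, anti_p z y, anti_d z y, anti_a z y, anti_b z y, anti_p w y, anti_d w y,
    anti_a w y, anti_b w y]
  -- With `R(e₀,e₁,e₂,e₃)` rewritten by the Bianchi identity, the isotropic curvature is the sum of
  -- the values of the form at `e₀ ∧ e₂ + e₁ ∧ e₃` and `e₀ ∧ e₃ - e₁ ∧ e₂`.
  refine (frame_sum_nonneg (b₁ := b₁) (b₂ := b₂) (b₃ := b₃) hS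
    xx yy zz ww xy xz xw yz yw zw).trans_eq ?_
  simp only [kform]
  ring

/-! ### From isotropic to orthogonal bisectional curvature -/

lemma rIn_smul_smul (a b : ℝ) (v w : KV 2) : rIn (a • v) (b • w) = a * b * rIn v w := by
  simp [rIn_eq_dot, dot, co]; ring

lemma rIn_comm (v w : KV 2) : rIn v w = rIn w v := by
  simp [rIn_eq_dot, dot]; ring

lemma rIn_Jm_Jm (v w : KV 2) : rIn (Jm v) (Jm w) = rIn v w := by
  simp [rIn_eq_dot, dot, co, Jm]; ring

lemma rIn_Jm_self (v : KV 2) : rIn v (Jm v) = 0 := by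
  simp [rIn_eq_dot, dot, co, Jm]; ring

lemma rIn_self_pos {v : KV 2} (hv : v ≠ 0) : 0 < rIn v v := by
  by_contra hcon
  apply hv
  simp only [rIn_eq_dot, dot, co, Matrix.cons_val] at hcon
  funext j
  fin_cases j <;> apply Complex.ext <;> simp <;>
    nlinarith [sq_nonneg (v 0).re, sq_nonneg (v 0).im, sq_nonneg (v 1).re, sq_nonneg (v 1).im]

/-- The isotropic curvature of the frame `(v, Jv, w, Jw)` is four times the bisectional
curvature `K(v,w) + K(v,Jw)`. -/
lemma isotropic_complex_frame {R : KV 2 →ₗ[ℝ] KV 2 →ₗ[ℝ] KV 2 →ₗ[ℝ] KV 2 →ₗ[ℝ] ℝ}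
    (hR : IsKahlerCurvature R) (v w : KV 2) :
    R v w w v + R v (Jm w) (Jm w) v + R (Jm v) w w (Jm v) + R (Jm v) (Jm w) (Jm w) (Jm v)
      - 2 * R v (Jm v) w (Jm w) = 4 * (Ksec R v w + Ksec R v (Jm w)) := by
  obtain ⟨hanti, hpair, hbi, hJ⟩ := hR
  have hJJ (x : KV 2) : Jm (Jm x) = -x := by
    funext j
    simp [Jm, ← mul_assoc]
  have h2 (x y z w) : R x y (Jm z) (Jm w) = R x y z w := by rw [hpair, hJ, hpair]
  have hanti' (x y z w) : R x y z w = -R x y w z := by rw [hpair, hanti, hpair]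
  have e1 : R (Jm v) (Jm w) (Jm w) (Jm v) = R v w w v := by rw [hJ, h2]
  have k (z t) : R (Jm v) w z t = -R v (Jm w) z t := by
    rw [← hJ (Jm v) w, hJJ, apply_neg_left]
  have e2 : R (Jm v) w w (Jm v) = R v (Jm w) (Jm w) v := by
    rw [k, hpair v, hanti w, k, neg_neg, hanti', neg_neg]
  have hb := hbi v (Jm v) w (Jm w)
  have e3 : R w v (Jm v) (Jm w) = R v w w v := by
    rw [h2, hpair]
  have e4 : R (Jm v) w v (Jm w) = R v (Jm w) (Jm w) v := by
    rw [k, hanti', neg_neg]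
  simp only [Ksec]
  linarith

lemma nob_of_isotropic (R : KV 2 →ₗ[ℝ] KV 2 →ₗ[ℝ] KV 2 →ₗ[ℝ] KV 2 →ₗ[ℝ] ℝ)
    (hR : IsKahlerCurvature R)
    (h : ∀ e : Fin 4 → KV 2, (∀ i j, rIn (e i) (e j) = if i = j then 1 else 0) →
      0 ≤ R (e 0) (e 2) (e 2) (e 0) + R (e 0) (e 3) (e 3) (e 0)
        + R (e 1) (e 2) (e 2) (e 1) + R (e 1) (e 3) (e 3) (e 1)
        - 2 * R (e 0) (e 1) (e 2) (e 3)) : NonnegOrthBisectional R := by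
  intro v w horth
  by_cases hv : v = 0
  · simp [Ksec, hv]
  by_cases hw : w = 0
  · have : Jm (0 : KV 2) = 0 := by funext j; simp [Jm]
    simp [Ksec, hw, this]
  have pv := rIn_self_pos hv
  have pw := rIn_self_pos hw
  obtain ⟨a, ha0, ha⟩ : ∃ a : ℝ, 0 < a ∧ a * a * rIn v v = 1 :=
    ⟨(√(rIn v v))⁻¹, by positivity, by
      rw [← mul_inv, Real.mul_self_sqrt pv.le, inv_mul_cancel₀ pv.ne']⟩
  obtain ⟨b, hb0, hb⟩ : ∃ b : ℝ, 0 < b ∧ b * b * rIn w w = 1 :=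
    ⟨(√(rIn w w))⁻¹, by positivity, by
      rw [← mul_inv, Real.mul_self_sqrt pw.le, inv_mul_cancel₀ pw.ne']⟩
  have hJI (x : KV 2) : Jm x = Complex.I • x := by funext j; simp [Jm]
  have o1 : rIn v w = 0 := by simpa using horth 1 1
  have o2 : rIn v (Jm w) = 0 := by simpa [hJI] using horth 1 Complex.I
  have o3 : rIn (Jm v) w = 0 := by simpa [hJI] using horth Complex.I 1
  have hJs (c : ℝ) (x : KV 2) : Jm (c • x) = c • Jm x := by
    funext j
    simp [Jm]; ring
  have hI := h ![a • v, a • Jm v, b • w, b • Jm w] (by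
    intro i j
    fin_cases i <;> fin_cases j <;>
      simp [rIn_smul_smul, rIn_Jm_Jm, rIn_Jm_self, ha, hb, o1, o2, o3, rIn_comm (Jm v) v,
        rIn_comm w v, rIn_comm (Jm w) v, rIn_comm w (Jm v), rIn_comm (Jm w) w])
  have hfr := isotropic_complex_frame hR (a • v) (b • w)
  simp only [Matrix.cons_val] at hI
  rw [← hJs, ← hJs, hfr] at hI
  simp only [Ksec, hJs, map_smul, LinearMap.smul_apply, smul_eq_mul] at hI ⊢
  refine nonneg_of_mul_nonneg_right (a := 4 * (a * a * (b * b))) ?_ (by positivity)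
  linarith

end KahlerSurface

/-- An algebraic Kähler curvature tensor on `ℂ²` has nonnegative
orthogonal bisectional curvature if and only if it has nonnegative isotropic curvature. -/
theorem orth_bisectional_iff_isotropic_surface
    (R : KV 2 →ₗ[ℝ] KV 2 →ₗ[ℝ] KV 2 →ₗ[ℝ] KV 2 →ₗ[ℝ] ℝ)
    (hR : IsKahlerCurvature R) :
    NonnegOrthBisectional R ↔
      (∀ e : Fin 4 → KV 2,
        (∀ i j, rIn (e i) (e j) = if i = j then 1 else 0) →
        0 ≤ R (e 0) (e 2) (e 2) (e 0) + R (e 0) (e 3) (e 3) (e 0)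
            + R (e 1) (e 2) (e 2) (e 1) + R (e 1) (e 3) (e 3) (e 1)
            - 2 * R (e 0) (e 1) (e 2) (e 3)) :=
  ⟨KahlerSurface.isotropic_of_nob R hR, KahlerSurface.nob_of_isotropic R hR⟩

end
end

section
/- Let n ≥ 2 and let R be an algebraic Kähler curvature tensor on ℂⁿ with nonnegative orthogonal bisectional curvature. Then for all unit vectors v₁, v₂ ∈ ℂⁿ with ℂ·v₁ ⊥ ℂ·v₂ one has Ric(v₁,v₁) + Ric(v₂,v₂) ≥ 0. -/
/-!
Write `B(v,w) = K(v,w) + K(v,Jw)`. For fixed `v`, `w ↦ B(v,w)` is the quadratic form of a symmetric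
`J`-invariant real bilinear form, and `Ric(v,v)` is its trace over `e₁, …, eₙ`.

* Trace (`trace_ge`). Instead of extending `v₁, v₂` to a unitary frame, split each standard vector as
  `e_j = a_j v₁ + b_j v₂ + p_j` with `p_j` hermitian-orthogonal to `v₁` and `v₂`. The trace of the
  form is then its value at `v₁`, plus its value at `v₂`, plus `∑ B(v,p_j)`, and the last sum is
  nonnegative for `v = v₁, v₂` by hypothesis. Hence
  `Ric(v₁,v₁) + Ric(v₂,v₂) ≥ B(v₁,v₁) + B(v₁,v₂) + B(v₂,v₁) + B(v₂,v₂)`.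
* Diagonal terms (`diag_identity`). The pairs `v₁ ± v₂` and `v₁ ± Jv₂` span orthogonal complex
  lines, and `B(v₁+v₂, v₁-v₂) + B(v₁+Jv₂, v₁-Jv₂) = 2 (B(v₁,v₁) + B(v₂,v₂))`,
  so `B(v₁,v₁) + B(v₂,v₂) ≥ 0` although neither summand needs to be nonnegative.
-/

noncomputable section

variable {n : ℕ}

lemma Jm_add (x y : KV n) : Jm (x + y) = Jm x + Jm y := by
  ext j; simp [Jm, mul_add]

lemma Jm_sub (x y : KV n) : Jm (x - y) = Jm x - Jm y := by
  ext j; simp [Jm, mul_sub]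

lemma Jm_smul (c : ℝ) (x : KV n) : Jm (c • x) = c • Jm x := by
  ext j; simp only [Jm, Pi.smul_apply, Complex.real_smul]; ring

lemma Jm_Jm (x : KV n) : Jm (Jm x) = -x := by
  ext j; simp [Jm, ← mul_assoc]

lemma smul_eq_re_im (c : ℂ) (x : KV n) : c • x = c.re • x + c.im • Jm x := by
  ext j
  simp only [Jm, Pi.smul_apply, Pi.add_apply, Complex.real_smul, smul_eq_mul]
  conv_lhs => rw [← Complex.re_add_im c]
  ring

/-- The standard hermitian inner product, conjugate-linear in the second slot. -/
def hI (x y : KV n) : ℂ := ∑ j, x j * star (y j)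

lemma hI_add_left (x y z : KV n) : hI (x + y) z = hI x z + hI y z := by
  simp [hI, add_mul, Finset.sum_add_distrib]

lemma hI_sub_left (x y z : KV n) : hI (x - y) z = hI x z - hI y z := by
  simp [hI, sub_mul, Finset.sum_sub_distrib]

lemma hI_smul_left (c : ℂ) (x z : KV n) : hI (c • x) z = c * hI x z := by
  simp [hI, Finset.mul_sum, mul_assoc]

lemma hI_star (x y : KV n) : star (hI x y) = hI y x := by
  simp [hI, mul_comm]

lemma hI_sub_right (x y z : KV n) : hI x (y - z) = hI x y - hI x z := by
  rw [← hI_star, hI_sub_left, star_sub, hI_star, hI_star]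

lemma hI_smul_right (c : ℂ) (x z : KV n) : hI x (c • z) = star c * hI x z := by
  rw [← hI_star, hI_smul_left, star_mul', hI_star]

lemma rIn_eq (x y : KV n) : rIn x y = (hI x y).re := by
  simp [rIn, hI]

lemma linesOrth_iff (v w : KV n) : linesOrth v w ↔ hI v w = 0 := by
  constructor
  · intro h
    -- Multiplying by `hI w v` turns the real part into `|hI v w|²`.
    have h1 := h (star (hI v w)) 1
    rw [rIn_eq, hI_smul_left, one_smul] at h1
    have h2 : (star (hI v w) * hI v w).re = Complex.normSq (hI v w) := by
      simp [Complex.normSq_apply]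
    exact Complex.normSq_eq_zero.mp (h2 ▸ h1)
  · intro h a b
    rw [rIn_eq, hI_smul_left, hI_smul_right, h]
    simp

lemma hI_self {v : KV n} (hv : rIn v v = 1) : hI v v = 1 := by
  apply Complex.ext
  · rw [← rIn_eq, hv]; simp
  · have := congrArg Complex.im (hI_star v v)
    simp at this ⊢
    linarith

lemma Jm_eq_smul (x : KV n) : Jm x = Complex.I • x := by
  ext j; simp [Jm]

lemma hI_eV (v : KV n) (j : Fin n) : hI (eV j) v = star (v j) := by
  simp [hI, eV, Pi.single_apply]

lemma sum_smul_eV (v : KV n) : ∑ j, v j • eV j = v := by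
  ext k
  simp [eV, Finset.sum_apply, Pi.single_apply]

section Trace

variable (S : KV n →ₗ[ℝ] KV n →ₗ[ℝ] ℝ)

/-- A `J`-invariant real bilinear form is the real part of a sesquilinear one: complex scalars move
across it by conjugation. -/
lemma S_smul_left (hJ : ∀ x y, S (Jm x) (Jm y) = S x y) (c : ℂ) (x y : KV n) :
    S (c • x) y = S x (star c • y) := by
  have h : S (Jm x) y = - S x (Jm y) := by
    rw [← hJ (Jm x) y, Jm_Jm]; simp
  rw [smul_eq_re_im, smul_eq_re_im]
  simp [h]

/-- `∑ⱼ ⟨e_j,u⟩⟨w,e_j⟩ = ⟨w,u⟩`, transported to `S`. -/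
lemma sum_S_coeff (hJ : ∀ x y, S (Jm x) (Jm y) = S x y) (u w x y : KV n) :
    ∑ j, S (star (u j) • x) (star (w j) • y) = S x (hI u w • y) := by
  simp_rw [S_smul_left S hJ, smul_smul, star_star, ← map_sum, ← Finset.sum_smul]
  rfl

lemma sum_S_eV (hJ : ∀ x y, S (Jm x) (Jm y) = S x y) (u x : KV n) :
    ∑ j, S (star (u j) • x) (eV j) = S x u := by
  simp_rw [S_smul_left S hJ, star_star, ← map_sum, sum_smul_eV]

/-- The trace of a `J`-invariant symmetric form that is nonnegative on the hermitian complement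
of an orthonormal pair is at least its trace on that pair. -/
lemma trace_ge (hJ : ∀ x y, S (Jm x) (Jm y) = S x y) (hs : ∀ x y, S x y = S y x)
    {v₁ v₂ : KV n} (h11 : hI v₁ v₁ = 1) (h22 : hI v₂ v₂ = 1) (h12 : hI v₁ v₂ = 0)
    (hpos : ∀ p, hI p v₁ = 0 → hI p v₂ = 0 → 0 ≤ S p p) :
    S v₁ v₁ + S v₂ v₂ ≤ ∑ j, S (eV j) (eV j) := by
  have h21 : hI v₂ v₁ = 0 := by rw [← hI_star, h12, star_zero]
  have hp : 0 ≤ ∑ j, S (eV j - (star (v₁ j) • v₁ + star (v₂ j) • v₂))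
      (eV j - (star (v₁ j) • v₁ + star (v₂ j) • v₂)) := by
    refine Finset.sum_nonneg fun j _ => hpos _ ?_ ?_
    · rw [hI_sub_left, hI_add_left, hI_smul_left, hI_smul_left, h11, h21, hI_eV]; ring
    · rw [hI_sub_left, hI_add_left, hI_smul_left, hI_smul_left, h22, h12, hI_eV]; ring
  have hexp : ∀ j, S (eV j - (star (v₁ j) • v₁ + star (v₂ j) • v₂))
      (eV j - (star (v₁ j) • v₁ + star (v₂ j) • v₂)) =
      S (eV j) (eV j) - 2 * S (star (v₁ j) • v₁) (eV j) - 2 * S (star (v₂ j) • v₂) (eV j)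
      + S (star (v₁ j) • v₁) (star (v₁ j) • v₁) + S (star (v₂ j) • v₂) (star (v₂ j) • v₂)
      + 2 * S (star (v₁ j) • v₁) (star (v₂ j) • v₂) := by
    intro j
    have e1 := hs (eV j) (star (v₁ j) • v₁)
    have e2 := hs (eV j) (star (v₂ j) • v₂)
    have e3 := hs (star (v₂ j) • v₂) (star (v₁ j) • v₁)
    simp only [map_sub, map_add, LinearMap.sub_apply, LinearMap.add_apply]
    linarith
  simp_rw [hexp, Finset.sum_add_distrib, Finset.sum_sub_distrib, ← Finset.mul_sum,
    sum_S_coeff S hJ, sum_S_eV S hJ, h11, h22, h12] at hp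
  simp only [one_smul, zero_smul, map_zero] at hp
  linarith

end Trace

section Curvature

variable {R : KV n →ₗ[ℝ] KV n →ₗ[ℝ] KV n →ₗ[ℝ] KV n →ₗ[ℝ] ℝ}

/-- The bisectional curvature `B(v,w) = K(v,w) + K(v,Jw)`. -/
def Bis (R : KV n →ₗ[ℝ] KV n →ₗ[ℝ] KV n →ₗ[ℝ] KV n →ₗ[ℝ] ℝ) (v w : KV n) : ℝ :=
  Ksec R v w + Ksec R v (Jm w)

lemma IsKahlerCurvature.J_right (hR : IsKahlerCurvature R) (x y z w : KV n) :
    R x y (Jm z) (Jm w) = R x y z w := by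
  rw [hR.2.1, hR.2.2.2, hR.2.1]

lemma IsKahlerCurvature.swap_right (hR : IsKahlerCurvature R) (x y z w : KV n) :
    R x y z w = - R x y w z := by
  rw [hR.2.1, hR.1, hR.2.1 w z]

/-- `J` is skew for the curvature operator's last two slots. -/
lemma IsKahlerCurvature.J_skew_right (hR : IsKahlerCurvature R) (x y z w : KV n) :
    R x y (Jm z) w = R x y (Jm w) z := by
  rw [← hR.J_right x y (Jm z) w, Jm_Jm, hR.swap_right]; simp

lemma IsKahlerCurvature.J_skew_left (hR : IsKahlerCurvature R) (x y z w : KV n) :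
    R x (Jm y) z w = R y (Jm x) z w := by
  rw [hR.2.1, hR.swap_right, hR.J_skew_right, ← hR.swap_right, hR.2.1]

/-- The form `R(x,Jx,Jy,y)` of bisectional curvature, from the Bianchi identity. -/
lemma Bis_eq (hR : IsKahlerCurvature R) (v w : KV n) :
    Bis R v w = R v (Jm v) (Jm w) w := by
  have h1 := hR.2.2.1 v (Jm v) (Jm w) w
  have h2 := hR.2.2.2 v w v w
  have h3 := hR.swap_right v w v w
  have h4 := hR.1 (Jm w) v (Jm v) w
  have h5 := hR.J_skew_right v (Jm w) v w
  simp only [Bis, Ksec]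
  linarith

/-- Polarization of `Bis` along an orthogonal pair. -/
lemma Bis_add_sub (hR : IsKahlerCurvature R) (x y : KV n) :
    Bis R (x + y) (x - y) =
      Bis R x x + Bis R y y + 2 * Bis R x y - 4 * R x (Jm y) (Jm x) y := by
  have pair : ∀ a b c d : KV n, R a (Jm b) (Jm c) d = R c (Jm d) (Jm a) b := by
    intro a b c d
    rw [hR.2.1, hR.1, hR.swap_right, neg_neg, hR.J_skew_left, hR.J_skew_right]
  have l := fun c d => hR.J_skew_left x y c d
  have r := fun a b => hR.J_skew_right a b x y
  simp only [Bis_eq hR, Jm_add, Jm_sub, map_add, map_sub, LinearMap.add_apply,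
    LinearMap.sub_apply, l, r]
  linarith [pair x x y y, pair x x y x, pair y y y x, pair y x y x, pair y x x x, pair y x y y]

lemma diag_identity (hR : IsKahlerCurvature R) (x y : KV n) :
    Bis R (x + y) (x - y) + Bis R (x + Jm y) (x - Jm y) = 2 * (Bis R x x + Bis R y y) := by
  rw [Bis_add_sub hR, Bis_add_sub hR]
  have h1 : Bis R (Jm y) (Jm y) = Bis R y y := by
    rw [Bis_eq hR, Bis_eq hR, hR.2.2.2, hR.J_right]
  have h2 : Bis R x (Jm y) = Bis R x y := by
    rw [Bis_eq hR, Bis_eq hR, hR.J_right]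
  have h3 : R x (Jm y) (Jm x) y + R x (Jm (Jm y)) (Jm x) (Jm y) = Bis R x y := by
    have a := hR.J_skew_right x (Jm y) x y
    have b := hR.swap_right x y x y
    rw [hR.J_right, Jm_Jm]
    simp only [Bis, Ksec, map_neg, LinearMap.neg_apply]
    linarith
  rw [h1, h2]
  linarith

/-- The bilinear form `(x,y) ↦ R(v,x,y,v) + R(v,Jx,Jy,v)` with quadratic form `B(v,·)`. -/
def bisForm (R : KV n →ₗ[ℝ] KV n →ₗ[ℝ] KV n →ₗ[ℝ] KV n →ₗ[ℝ] ℝ) (v : KV n) :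
    KV n →ₗ[ℝ] KV n →ₗ[ℝ] ℝ :=
  LinearMap.mk₂ ℝ (fun x y => R v x y v + R v (Jm x) (Jm y) v)
    (by intros; simp only [Jm_add, map_add, LinearMap.add_apply]; ring)
    (by intros; simp only [Jm_smul, map_smul, LinearMap.smul_apply, smul_eq_mul]; ring)
    (by intros; simp only [Jm_add, map_add, LinearMap.add_apply]; ring)
    (by intros; simp only [Jm_smul, map_smul, LinearMap.smul_apply, smul_eq_mul]; ring)

lemma bisForm_apply (v x y : KV n) :
    bisForm R v x y = R v x y v + R v (Jm x) (Jm y) v := rfl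

lemma RicK_ge (hR : IsKahlerCurvature R) (hOB : NonnegOrthBisectional R) {v v₁ v₂ : KV n}
    (h11 : hI v₁ v₁ = 1) (h22 : hI v₂ v₂ = 1) (h12 : hI v₁ v₂ = 0) (hv : v = v₁ ∨ v = v₂) :
    Bis R v v₁ + Bis R v v₂ ≤ RicK R v v := by
  have symm : ∀ x y, R v x y v = R v y x v := fun x y => by
    rw [hR.2.1, hR.1, hR.swap_right, neg_neg]
  refine trace_ge (bisForm R v) ?_ ?_ h11 h22 h12 ?_
  · intro x y
    simp only [bisForm_apply, Jm_Jm, map_neg, LinearMap.neg_apply]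
    ring
  · intro x y
    rw [bisForm_apply, bisForm_apply, symm x, symm (Jm x)]
  · intro p h1 h2
    refine hOB v p ((linesOrth_iff _ _).2 ?_)
    rw [← hI_star]
    rcases hv with rfl | rfl <;> simp [*]

end Curvature

/-- (Claim 1) For an algebraic Kähler curvature tensor on `ℂⁿ` (`n ≥ 2`)
with nonnegative orthogonal bisectional curvature and unit vectors `v₁ ⊥_ℂ v₂`,
one has `Ric(v₁,v₁) + Ric(v₂,v₂) ≥ 0`. -/
theorem ric_sum_nonneg_of_orth_bisectional (n : ℕ) (hn : 2 ≤ n)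
    (R : KV n →ₗ[ℝ] KV n →ₗ[ℝ] KV n →ₗ[ℝ] KV n →ₗ[ℝ] ℝ)
    (hR : IsKahlerCurvature R) (hOB : NonnegOrthBisectional R)
    (v₁ v₂ : KV n) (hv₁ : rIn v₁ v₁ = 1) (hv₂ : rIn v₂ v₂ = 1)
    (horth : linesOrth v₁ v₂) :
    0 ≤ RicK R v₁ v₁ + RicK R v₂ v₂ := by
  have h11 := hI_self hv₁
  have h22 := hI_self hv₂
  have h12 := (linesOrth_iff _ _).1 horth
  have h21 : hI v₂ v₁ = 0 := by rw [← hI_star, h12, star_zero]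
  have r1 := RicK_ge hR hOB h11 h22 h12 (Or.inl rfl)
  have r2 := RicK_ge hR hOB h11 h22 h12 (Or.inr rfl)
  have b12 : 0 ≤ Bis R v₁ v₂ := hOB _ _ horth
  have b21 : 0 ≤ Bis R v₂ v₁ := hOB _ _ ((linesOrth_iff _ _).2 h21)
  have d1 : 0 ≤ Bis R (v₁ + v₂) (v₁ - v₂) := by
    refine hOB _ _ ((linesOrth_iff _ _).2 ?_)
    simp [hI_add_left, hI_sub_right, h11, h22, h12, h21]
  have d2 : 0 ≤ Bis R (v₁ + Jm v₂) (v₁ - Jm v₂) := by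
    refine hOB _ _ ((linesOrth_iff _ _).2 ?_)
    simp [Jm_eq_smul, hI_add_left, hI_sub_right, hI_smul_left, hI_smul_right, h11, h22, h12, h21]
  have := diag_identity hR v₁ v₂
  linarith

end
end
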